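/- In a normal collective argumentation theory, a set of arguments Γ is stable if and only if Γ = {α | ¬(Γ ↝ {α})}. -/

import Mathlib

/-- Monotonicity: the defining condition of a collective argumentation theory. -/
def Mono {A : Type*} (att : Set A → Set A → Prop) : Prop :=
  ∀ Γ Δ Γ' Δ' : Set A, att Γ Δ → att (Γ ∪ Γ') (Δ ∪ Δ')

/-- Compactness: an attack holds only if it holds between finite subsets. -/
def Compact {A : Type*} (att : Set A → Set A → Prop) : Prop :=
  ∀ Γ Δ : Set A, att Γ Δ →
    ∃ Γ' ⊆ Γ, ∃ Δ' ⊆ Δ, Γ'.Finite ∧ Δ'.Finite ∧ att Γ' Δ'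

/-- A collective argumentation theory is affirmative if no set attacks the empty set. -/
def Affirmative {A : Type*} (att : Set A → Set A → Prop) : Prop :=
  ∀ Γ : Set A, ¬ att Γ (∅ : Set A)

/-- A collective argumentation theory is local if Γ ↝ Δ ∪ Δ' implies Γ ↝ Δ or Γ ↝ Δ'. -/
def Local {A : Type*} (att : Set A → Set A → Prop) : Prop :=
  ∀ Γ Δ Δ' : Set A, att Γ (Δ ∪ Δ') → att Γ Δ ∨ att Γ Δ'

/-- Γ is stable if Γ is a maximal element of ⟨Γ⟩ = {Δ | ¬ att Γ Δ}. -/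
def Stable {A : Type*} (att : Set A → Set A → Prop) (Γ : Set A) : Prop :=
  ¬ att Γ Γ ∧ ∀ Δ : Set A, Γ ⊂ Δ → att Γ Δ

/-!
In a normal theory a set attacks `Δ` exactly when it attacks some member of `Δ`: compactness reduces
to finite `Δ`, which locality splits into singletons, and affirmativity excludes `∅`. Hence `⟨Γ⟩` is
the power set of `{α | ¬ att Γ {α}}`, whose only maximal element is that set itself.
-/

section Attack

variable {A : Type*} {att : Set A → Set A → Prop} {Γ Γ' Δ Δ' : Set A}

theorem Mono.att_of_subset (hmono : Mono att) (hΓ : Γ ⊆ Γ') (hΔ : Δ ⊆ Δ') (h : att Γ Δ) :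
    att Γ' Δ' := by
  simpa only [Set.union_eq_self_of_subset_left hΓ, Set.union_eq_self_of_subset_left hΔ]
    using hmono Γ Δ Γ' Δ' h

theorem Local.not_att_of_finite (hloc : Local att) (haff : Affirmative att) (hΔ : Δ.Finite)
    (h : ∀ α ∈ Δ, ¬ att Γ {α}) : ¬ att Γ Δ := by
  induction Δ, hΔ using Set.Finite.induction_on with
  | empty => exact haff Γ
  | @insert α Θ _ _ ih =>
    rw [Set.forall_mem_insert] at h
    rw [Set.insert_eq]
    exact fun hatt ↦ (hloc Γ {α} Θ hatt).elim h.1 (ih h.2)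

theorem not_att_iff_forall_mem (hmono : Mono att) (haff : Affirmative att) (hloc : Local att)
    (hcomp : Compact att) : ¬ att Γ Δ ↔ ∀ α ∈ Δ, ¬ att Γ {α} := by
  refine ⟨fun h α hα hatt ↦ h ?_, fun h hatt ↦ ?_⟩
  · exact hmono.att_of_subset subset_rfl (Set.singleton_subset_iff.mpr hα) hatt
  · obtain ⟨Γ₀, hΓ₀, Δ₀, hΔ₀, -, hfin, hatt₀⟩ := hcomp Γ Δ hatt
    exact hloc.not_att_of_finite haff hfin (fun α hα ↦ h α (hΔ₀ hα))
      (hmono.att_of_subset hΓ₀ subset_rfl hatt₀)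

theorem stable_iff_maximal : Stable att Γ ↔ Maximal (fun Δ ↦ ¬ att Γ Δ) Γ := by
  simp only [Stable, Set.maximal_iff_forall_ssuperset, not_not]

end Attack

theorem normal_stable_iff {A : Type*} (att : Set A → Set A → Prop)
    (hmono : Mono att) (haff : Affirmative att) (hloc : Local att)
    (hcomp : Compact att) (Γ : Set A) :
    Stable att Γ ↔ Γ = {α : A | ¬ att Γ {α}} := by
  have not_att_iff_subset (Δ : Set A) : ¬ att Γ Δ ↔ Δ ⊆ {α | ¬ att Γ {α}} :=
    not_att_iff_forall_mem hmono haff hloc hcomp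
  calc
    Stable att Γ ↔ Maximal (fun Δ ↦ ¬ att Γ Δ) Γ := stable_iff_maximal
    _ ↔ Maximal (· ≤ {α | ¬ att Γ {α}}) Γ := by
      rw [funext fun Δ ↦ propext (not_att_iff_subset Δ)]
    _ ↔ Γ = {α | ¬ att Γ {α}} := maximal_le_iff
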